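/- Derivative bound for low-frequency projections (Lemma 2.2, estimate (2.6)). Let α ∈ [0,1), D ≥ 1, R ≥ 10, and let N ≥ 1 be dyadic. There exists a constant C = C(α,D) such that for every measurable φ : ℝ → ℂ with ‖⟨x⟩^{-D} φ‖_{L¹(ℝ)} < ∞, one has N^{α-1} ‖∂ₓ P_{≤N} φ‖_{C⁰([-R,R])} ≤ C ( ‖φ‖_{C^α([-2R,2R])} + (RN)^{-D} ‖⟨x⟩^{-D} φ‖_{L¹(ℝ)} ). -/

import Mathlib

open MeasureTheory Real Set ENNReal

noncomputable section

/-- The Japanese bracket `⟨x⟩ = √(1 + x²)`. -/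
def jap (x : ℝ) : ℝ := Real.sqrt (1 + x ^ 2)

/-- The inverse Fourier transform `ǧ(x) = (2π)^{-1/2} ∫ g(ξ) e^{i x ξ} dξ`. -/
def invFourier (g : ℝ → ℝ) (x : ℝ) : ℂ :=
  (Real.sqrt (2 * Real.pi) : ℂ)⁻¹ * ∫ ξ : ℝ, (g ξ : ℂ) * Complex.exp (Complex.I * ((x * ξ : ℝ) : ℂ))

/-- `ρ` is an admissible Littlewood–Paley bump function: smooth, `[0,1]`-valued, equal to `1`
on `[-1,1]` and vanishing outside of `[-9/8, 9/8]`. -/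
def IsLPBump (ρ : ℝ → ℝ) : Prop :=
  ContDiff ℝ (⊤ : ℕ∞) ρ ∧ (∀ ξ, ρ ξ ∈ Set.Icc (0 : ℝ) 1) ∧
    (∀ ξ ∈ Set.Icc (-1 : ℝ) 1, ρ ξ = 1) ∧
    ∀ ξ, ξ ∉ Set.Icc (-(9/8) : ℝ) (9/8) → ρ ξ = 0

/-- The symbol `ρ_{≤N}(ξ) = ρ(ξ/N)`. -/
def rhoLE (ρ : ℝ → ℝ) (N : ℝ) (ξ : ℝ) : ℝ := ρ (ξ / N)

open scoped Classical in
/-- The symbol `ρ_N`: `ρ_1 = ρ_{≤1}` and `ρ_N = ρ_{≤N} - ρ_{≤N/2}` for dyadic `N ≥ 2`. -/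
def rhoD (ρ : ℝ → ℝ) (N : ℝ) (ξ : ℝ) : ℝ :=
  if N = 1 then ρ ξ else ρ (ξ / N) - ρ (2 * ξ / N)

/-- The Littlewood–Paley projection `P_{≤N} φ = ρ̌_{≤N} ∗ φ`. -/
def PLE (ρ : ℝ → ℝ) (N : ℝ) (φ : ℝ → ℂ) (x : ℝ) : ℂ :=
  ∫ y : ℝ, invFourier (rhoLE ρ N) y * φ (x - y)

/-- The Littlewood–Paley projection `P_N φ = ρ̌_N ∗ φ`. -/
def PD (ρ : ℝ → ℝ) (N : ℝ) (φ : ℝ → ℂ) (x : ℝ) : ℂ :=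
  ∫ y : ℝ, invFourier (rhoD ρ N) y * φ (x - y)

/-- The weighted norm `‖⟨x⟩^{-D} φ‖_{L¹(ℝ)}`. -/
def wL1 (D : ℝ) (φ : ℝ → ℂ) : ℝ := ∫ x : ℝ, jap x ^ (-D) * ‖φ x‖

/-- The `ℝ≥0∞`-valued sup-norm `‖φ‖_{C⁰(I)}`. -/
def supNormE (I : Set ℝ) (φ : ℝ → ℂ) : ℝ≥0∞ := ⨆ x ∈ I, (‖φ x‖₊ : ℝ≥0∞)

/-- The `ℝ≥0∞`-valued Hölder seminorm on `I`. -/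
def holderSemiE (α : ℝ) (I : Set ℝ) (φ : ℝ → ℂ) : ℝ≥0∞ :=
  ⨆ x ∈ I, ⨆ y ∈ I, ⨆ _ : x ≠ y, ⨆ _ : |x - y| ≤ 1,
    ENNReal.ofReal (‖φ x - φ y‖ / |x - y| ^ α)

open scoped Classical in
/-- The `ℝ≥0∞`-valued Hölder norm `‖φ‖_{C^α(I)}`; for `α = 0` it is the sup-norm. -/
def holderNormE (α : ℝ) (I : Set ℝ) (φ : ℝ → ℂ) : ℝ≥0∞ :=
  if α = 0 then supNormE I φ else supNormE I φ + holderSemiE α I φ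

/-!
Convolving with the derivative of the kernel `N ρ̌(N·)` annihilates constants, so
`∂ₓ P_{≤N} φ(x) = N² ∫ ρ̌'(N(x - y)) (φ(y) - φ(x)) dy`. For `|x| ≤ R` the Hölder norm on
`[-2R, 2R]` bounds the increment by a multiple of `|x - y|^α`, up to the term `|φ(y)|` when
`|y| > 2R`. By scaling, the first part integrates to a multiple of `N^{1-α}`. In the second,
`|x - y|` is at least `R` and at least `|y|/2`, so the rapid decay of `ρ̌'` pays for both
`(RN)^{-D}` and the weight `⟨y⟩^{-D}`.
-/

open scoped SchwartzMap FourierTransform ContDiff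

lemma rpow_le_rpow_abs {a t : ℝ} (ha : 1 ≤ a) (hat : a ≤ t) (D : ℝ) : a ^ D ≤ t ^ |D| :=
  calc a ^ D ≤ a ^ |D| := rpow_le_rpow_of_exponent_le ha (le_abs_self D)
    _ ≤ t ^ |D| := by gcongr

section Schwartz

variable {E F : Type*} [NormedAddCommGroup E] [NormedSpace ℝ E] [NormedAddCommGroup F]
  [NormedSpace ℝ F]

lemma exists_one_add_norm_rpow_mul_norm_le (f : 𝓢(E, F)) (s : ℝ) :
    ∃ C : ℝ, 0 < C ∧ ∀ x, (1 + ‖x‖) ^ s * ‖f x‖ ≤ C := by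
  obtain ⟨k, hk⟩ := exists_nat_ge s
  set B := 2 ^ k * (Finset.Iic (k, 0)).sup (fun m => SchwartzMap.seminorm ℝ m.1 m.2) f
  have hB (x : E) : (1 + ‖x‖) ^ k * ‖f x‖ ≤ B := by
    simpa using SchwartzMap.one_add_le_sup_seminorm_apply (𝕜 := ℝ) (m := (k, 0)) le_rfl le_rfl f x
  refine ⟨max B 1, by positivity, fun x => ?_⟩
  calc (1 + ‖x‖) ^ s * ‖f x‖ ≤ (1 + ‖x‖) ^ (k : ℝ) * ‖f x‖ := by
        gcongr
        linarith [norm_nonneg x]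
    _ ≤ B := by simpa only [Real.rpow_natCast] using hB x
    _ ≤ max B 1 := le_max_left B 1

lemma integrable_norm_rpow_mul_norm [FiniteDimensional ℝ E] [MeasurableSpace E] [BorelSpace E]
    {μ : Measure E} [μ.IsAddHaarMeasure] (f : 𝓢(E, F)) {s : ℝ} (hs : 0 ≤ s) :
    Integrable (fun x => ‖x‖ ^ s * ‖f x‖) μ := by
  obtain ⟨d, hd⟩ : ∃ d : ℝ, Module.finrank ℝ E < d := exists_gt _
  obtain ⟨C, -, hC⟩ := exists_one_add_norm_rpow_mul_norm_le f (d + s)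
  have hdecay : Integrable (fun x => C * (1 + ‖x‖) ^ (-d)) μ :=
    (integrable_one_add_norm hd).const_mul C
  have hcont : Continuous fun x => ‖x‖ ^ s * ‖f x‖ :=
    (continuous_norm.rpow_const fun _ => .inr hs).mul f.continuous.norm
  refine hdecay.mono' hcont.aestronglyMeasurable (ae_of_all _ fun x => ?_)
  have hx : 0 < 1 + ‖x‖ := by positivity
  rw [norm_of_nonneg (by positivity), rpow_neg hx.le, ← div_eq_mul_inv, le_div_iff₀ (by positivity)]
  calc ‖x‖ ^ s * ‖f x‖ * (1 + ‖x‖) ^ d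
      ≤ (1 + ‖x‖) ^ s * ‖f x‖ * (1 + ‖x‖) ^ d := by gcongr; linarith
    _ = (1 + ‖x‖) ^ (d + s) * ‖f x‖ := by rw [Real.rpow_add hx d s]; ring
    _ ≤ C := hC x

/-- The dilate `x ↦ f (a x)` of a Schwartz function, as a Schwartz function. -/
def dilate (a : ℝ) (ha : a ≠ 0) (f : 𝓢(E, F)) : 𝓢(E, F) :=
  SchwartzMap.compCLMOfContinuousLinearEquiv ℝ
    (ContinuousLinearEquiv.smulLeft (Units.mk0 a ha)) f

lemma dilate_apply {a : ℝ} (ha : a ≠ 0) (f : 𝓢(E, F)) (x : E) : dilate a ha f x = f (a • x) :=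
  rfl

lemma deriv_dilate {a : ℝ} (ha : a ≠ 0) (f : 𝓢(ℝ, F)) (x : ℝ) :
    deriv (dilate a ha f) x = a • deriv f (a * x) :=
  deriv_comp_mul_left a f x

end Schwartz

section JapaneseBracket

lemma one_le_jap (x : ℝ) : 1 ≤ jap x :=
  one_le_sqrt.2 (by linarith [sq_nonneg x])

lemma jap_pos (x : ℝ) : 0 < jap x :=
  one_pos.trans_le (one_le_jap x)

lemma jap_le_one_add_abs (x : ℝ) : jap x ≤ 1 + |x| :=
  sqrt_le_iff.2 ⟨by positivity, by nlinarith [sq_abs x, abs_nonneg x]⟩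

end JapaneseBracket

section Convolution

variable {E : Type*} [NormedAddCommGroup E]

lemma exists_norm_comp_sub_le_jap_rpow [NormedSpace ℝ E] (f : 𝓢(ℝ, E)) (D A : ℝ) :
    ∃ C : ℝ, ∀ x y, |x| ≤ A → ‖f (x - y)‖ ≤ C * jap y ^ (-D) := by
  obtain ⟨C, -, hC⟩ := exists_one_add_norm_rpow_mul_norm_le f |D|
  refine ⟨(1 + A) ^ |D| * C, fun x y hx => ?_⟩
  have hA : 0 ≤ A := (abs_nonneg x).trans hx
  have hjap : jap y ≤ (1 + A) * (1 + |x - y|) := by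
    have htri : |y| ≤ |x| + |x - y| := by simpa using abs_sub x (x - y)
    nlinarith [jap_le_one_add_abs y, abs_nonneg (x - y)]
  have hj : 0 < jap y := jap_pos y
  rw [rpow_neg hj.le, ← div_eq_mul_inv, le_div_iff₀ (by positivity)]
  calc ‖f (x - y)‖ * jap y ^ D
      ≤ ‖f (x - y)‖ * ((1 + A) * (1 + |x - y|)) ^ |D| := by
        gcongr
        exact rpow_le_rpow_abs (one_le_jap y) hjap D
    _ = (1 + A) ^ |D| * ((1 + |x - y|) ^ |D| * ‖f (x - y)‖) := by
        rw [mul_rpow (by positivity) (by positivity)]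
        ring
    _ ≤ (1 + A) ^ |D| * C := by
        gcongr
        exact hC _

variable [NormedSpace ℂ E] {D : ℝ} {φ : ℝ → E}

lemma integrable_comp_sub_smul (f : 𝓢(ℝ, ℂ)) (hφ : AEStronglyMeasurable φ)
    (hint : Integrable fun x => jap x ^ (-D) * ‖φ x‖) (x : ℝ) :
    Integrable fun y => f (x - y) • φ y := by
  obtain ⟨C, hC⟩ := exists_norm_comp_sub_le_jap_rpow f D |x|
  have hf : Continuous fun y => f (x - y) := by fun_prop
  refine (hint.const_mul C).mono' (hf.aestronglyMeasurable.smul hφ) (ae_of_all _ fun y => ?_)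
  rw [norm_smul, ← mul_assoc]
  gcongr
  exact hC x y le_rfl

lemma hasDerivAt_integral_comp_sub_smul (f : 𝓢(ℝ, ℂ)) (hφ : AEStronglyMeasurable φ)
    (hint : Integrable fun x => jap x ^ (-D) * ‖φ x‖) (x : ℝ) :
    HasDerivAt (fun x => ∫ y, f (x - y) • φ y) (∫ y, deriv f (x - y) • φ y) x := by
  set f' := SchwartzMap.derivCLM ℝ ℂ f
  obtain ⟨C, hC⟩ := exists_norm_comp_sub_le_jap_rpow f' D (|x| + 1)
  refine (hasDerivAt_integral_of_dominated_loc_of_deriv_le (F' := fun x y => f' (x - y) • φ y)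
    (bound := fun y => C * (jap y ^ (-D) * ‖φ y‖)) (Metric.ball_mem_nhds x one_pos)
    (.of_forall fun x => (integrable_comp_sub_smul f hφ hint x).aestronglyMeasurable)
    (integrable_comp_sub_smul f hφ hint x)
    (integrable_comp_sub_smul f' hφ hint x).aestronglyMeasurable
    (ae_of_all _ fun y x' hx' => ?_) (hint.const_mul C) (ae_of_all _ fun y x' _ => ?_)).2
  · have hx'A : |x'| ≤ |x| + 1 := by
      have hdist : |x' - x| < 1 := hx'
      linarith [abs_sub_abs_le_abs_sub x' x]
    rw [norm_smul, ← mul_assoc]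
    gcongr
    exact hC x' y hx'A
  · exact ((f.hasDerivAt (x' - y)).comp_sub_const x' y).smul_const (φ y)

lemma integral_deriv_comp_sub_smul_sub (f : 𝓢(ℝ, ℂ)) (hφ : AEStronglyMeasurable φ)
    (hint : Integrable fun x => jap x ^ (-D) * ‖φ x‖) (x : ℝ) (c : E) :
    ∫ y, deriv f (x - y) • (φ y - c) = ∫ y, deriv f (x - y) • φ y := by
  set f' := SchwartzMap.derivCLM ℝ ℂ f
  have hf' : Integrable fun y => f' (x - y) • c := (f'.integrable.comp_sub_left x).smul_const c
  have hderiv (y : ℝ) : HasDerivAt (fun y => -(f (x - y) • c)) (f' (x - y) • c) y := by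
    simpa only [neg_smul, neg_neg] using!
      (((f.hasDerivAt (x - y)).comp_const_sub x y).smul_const c).neg
  have hzero : ∫ y, f' (x - y) • c = 0 :=
    integral_eq_zero_of_hasDerivAt_of_integrable hderiv hf'
      ((f.integrable.comp_sub_left x).smul_const c).neg
  calc ∫ y, f' (x - y) • (φ y - c)
      = ∫ y, (f' (x - y) • φ y - f' (x - y) • c) := by
        simp only [smul_sub]
    _ = ∫ y, f' (x - y) • φ y := by
        rw [integral_sub (integrable_comp_sub_smul f' hφ hint x) hf', hzero, sub_zero]

end Convolution

section LittlewoodPaley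

/-- The inverse Fourier transform `ρ̌` of a Schwartz symbol, as a Schwartz function. The dilation
passes between the unitary normalization of `invFourier` and the kernel `e^{2πixξ}` of `𝓕⁻`. -/
def invFourierSchwartz (ρ : 𝓢(ℝ, ℝ)) : 𝓢(ℝ, ℂ) :=
  (√(2 * π) : ℂ)⁻¹ •
    dilate (2 * π)⁻¹ (by positivity) (𝓕⁻ (SchwartzMap.postcompCLM Complex.ofRealCLM ρ))

lemma invFourierSchwartz_apply (ρ : 𝓢(ℝ, ℝ)) (x : ℝ) :
    invFourierSchwartz ρ x = invFourier ρ x := by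
  rw [invFourierSchwartz, invFourier, smul_apply, dilate_apply,
    SchwartzMap.fourierInv_coe, Real.fourierInv_eq', smul_eq_mul]
  congr 2 with ξ
  have hphase : 2 * π * inner ℝ ξ ((2 * π)⁻¹ • x) = x * ξ := by
    rw [Real.inner_apply, smul_eq_mul]
    field_simp
  rw [hphase, smul_eq_mul, mul_comm, mul_comm Complex.I]
  rfl

lemma invFourier_rhoLE (ρ : ℝ → ℝ) {N : ℝ} (hN : 0 < N) (y : ℝ) :
    invFourier (rhoLE ρ N) y = N * invFourier ρ (N * y) := by
  have hscale := Measure.integral_comp_div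
    (fun ξ : ℝ => (ρ ξ : ℂ) * Complex.exp (Complex.I * ((N * y * ξ : ℝ) : ℂ))) N
  have hphase (ξ : ℝ) : N * y * (ξ / N) = y * ξ := by field_simp
  simp only [hphase, abs_of_pos hN, Complex.real_smul] at hscale
  simp only [invFourier, rhoLE, hscale]
  ring

variable {D N : ℝ} {φ : ℝ → ℂ}

lemma PLE_eq_integral (ρ : 𝓢(ℝ, ℝ)) (hN : 0 < N) (φ : ℝ → ℂ) (x : ℝ) :
    PLE ρ N φ x = N * ∫ y, dilate N hN.ne' (invFourierSchwartz ρ) (x - y) • φ y := by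
  rw [PLE, ← integral_sub_left_eq_self _ volume x, ← integral_const_mul]
  simp only [invFourier_rhoLE _ hN, _root_.sub_sub_cancel, dilate_apply, invFourierSchwartz_apply,
    smul_eq_mul, mul_assoc]

lemma deriv_PLE (ρ : 𝓢(ℝ, ℝ)) (hN : 0 < N) (hφ : AEStronglyMeasurable φ)
    (hint : Integrable fun x => jap x ^ (-D) * ‖φ x‖) (x : ℝ) :
    deriv (PLE ρ N φ) x =
      N ^ 2 * ∫ y, deriv (invFourierSchwartz ρ) (N * (x - y)) * (φ y - φ x) := by
  set K := dilate N hN.ne' (invFourierSchwartz ρ)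
  calc deriv (PLE ρ N φ) x = N * ∫ y, deriv K (x - y) • φ y := by
        rw [funext (PLE_eq_integral ρ hN φ)]
        exact ((hasDerivAt_integral_comp_sub_smul K hφ hint x).const_mul (N : ℂ)).deriv
    _ = N * ∫ y, deriv K (x - y) • (φ y - φ x) := by
        rw [integral_deriv_comp_sub_smul_sub K hφ hint]
    _ = _ := by
        simp only [K, deriv_dilate, Complex.real_smul, smul_eq_mul, mul_assoc, integral_const_mul]
        ring

end LittlewoodPaley

section Holder

variable {α R : ℝ} {I : Set ℝ} {φ : ℝ → ℂ} {x y : ℝ}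

lemma mul_supNormE_le_iff {a b : ℝ≥0∞} :
    a * supNormE I φ ≤ b ↔ ∀ x ∈ I, a * ‖φ x‖ₑ ≤ b := by
  simp only [supNormE, ENNReal.mul_iSup, iSup_le_iff, enorm_eq_nnnorm]

lemma supNormE_le_holderNormE : supNormE I φ ≤ holderNormE α I φ := by
  rw [holderNormE]
  split_ifs
  exacts [le_rfl, le_self_add]

lemma norm_le_toReal_holderNormE (hfin : holderNormE α I φ ≠ ⊤) (hx : x ∈ I) :
    ‖φ x‖ ≤ (holderNormE α I φ).toReal := by
  have hsup : ‖φ x‖ₑ ≤ supNormE I φ := le_iSup₂ (f := fun x _ => (‖φ x‖₊ : ℝ≥0∞)) x hx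
  simpa using ENNReal.toReal_mono hfin (hsup.trans supNormE_le_holderNormE)

lemma norm_sub_le_holderNormE_mul_of_abs_sub_le_one (hα : α ≠ 0) (hfin : holderNormE α I φ ≠ ⊤)
    (hx : x ∈ I) (hy : y ∈ I) (hxy : |x - y| ≤ 1) :
    ‖φ y - φ x‖ ≤ (holderNormE α I φ).toReal * |x - y| ^ α := by
  rcases eq_or_ne x y with rfl | hne
  · simp [hα]
  have hsemi : ENNReal.ofReal (‖φ x - φ y‖ / |x - y| ^ α) ≤ holderSemiE α I φ :=
    le_iSup₂_of_le x hx <| le_iSup₂_of_le y hy <| le_iSup₂_of_le hne hxy le_rfl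
  have hle : holderSemiE α I φ ≤ holderNormE α I φ := by
    rw [holderNormE, if_neg hα]
    exact le_add_self
  have hquot := (ENNReal.ofReal_le_iff_le_toReal hfin).1 (hsemi.trans hle)
  rwa [div_le_iff₀ (rpow_pos_of_pos (abs_sub_pos.2 hne) α), norm_sub_rev] at hquot

lemma norm_sub_le_two_mul_holderNormE_mul (hα : 0 ≤ α) (hfin : holderNormE α I φ ≠ ⊤)
    (hx : x ∈ I) (hy : y ∈ I) :
    ‖φ y - φ x‖ ≤ 2 * (holderNormE α I φ).toReal * |x - y| ^ α := by
  set H := (holderNormE α I φ).toReal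
  -- The seminorm only sees pairs at distance at most one; the sup norm handles the others.
  have hsum : ‖φ y - φ x‖ ≤ 2 * H := by
    linarith [norm_sub_le (φ y) (φ x), norm_le_toReal_holderNormE hfin hx,
      norm_le_toReal_holderNormE hfin hy]
  rcases eq_or_ne α 0 with rfl | hα0
  · simpa using hsum
  rcases le_total |x - y| 1 with hnear | hfar
  · have hH : 0 ≤ H * |x - y| ^ α := by positivity
    linarith [norm_sub_le_holderNormE_mul_of_abs_sub_le_one hα0 hfin hx hy hnear]
  · exact hsum.trans (le_mul_of_one_le_right (by positivity) (one_le_rpow hfar hα))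

lemma norm_sub_le_holderNormE_mul_add_indicator (hα : 0 ≤ α) (hR : 1 ≤ R)
    (hfin : holderNormE α (Icc (-(2 * R)) (2 * R)) φ ≠ ⊤) (hx : x ∈ Icc (-R) R) (y : ℝ) :
    ‖φ y - φ x‖ ≤ 2 * (holderNormE α (Icc (-(2 * R)) (2 * R)) φ).toReal * |x - y| ^ α +
      (Icc (-(2 * R)) (2 * R))ᶜ.indicator (fun y => ‖φ y‖) y := by
  set H := (holderNormE α (Icc (-(2 * R)) (2 * R)) φ).toReal
  have hx2 : x ∈ Icc (-(2 * R)) (2 * R) := Icc_subset_Icc (by linarith) (by linarith) hx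
  by_cases hy : y ∈ Icc (-(2 * R)) (2 * R)
  · simpa [hy] using norm_sub_le_two_mul_holderNormE_mul hα hfin hx2 hy
  · -- For `|y| > 2R` the points are at distance at least one, so the Hölder term absorbs `‖φ x‖`.
    have hxy : 1 ≤ |x - y| := by
      have hyR : 2 * R < |y| := not_le.1 fun h => hy (abs_le.1 h)
      have htri : |y| ≤ |x| + |x - y| := by simpa using abs_sub x (x - y)
      linarith [abs_le.2 hx]
    have hφx : ‖φ x‖ ≤ 2 * H * |x - y| ^ α := by
      nlinarith [norm_le_toReal_holderNormE hfin hx2, one_le_rpow hxy hα, norm_nonneg (φ x)]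
    rw [indicator_of_mem hy]
    linarith [norm_sub_le (φ y) (φ x)]

end Holder

section KernelEstimates

variable {D N R x y : ℝ} {φ : ℝ → ℂ}

lemma rpow_mul_integral_abs_rpow_mul_comp (g : ℝ → ℝ) (s : ℝ) (hN : 0 < N) (x : ℝ) :
    N ^ (s + 1) * ∫ y, |x - y| ^ s * g (N * (x - y)) = ∫ z, |z| ^ s * g z := by
  have hscale := Measure.integral_comp_mul_left (fun z => |z| ^ s * g z) N
  rw [abs_of_pos (by positivity), smul_eq_mul, eq_inv_mul_iff_mul_eq₀ hN.ne'] at hscale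
  rw [integral_sub_left_eq_self (fun y => |y| ^ s * g (N * y)) volume x, ← hscale,
    ← integral_const_mul, ← integral_const_mul]
  congr with z
  rw [abs_mul, abs_of_pos hN, mul_rpow hN.le (abs_nonneg z), rpow_add_one hN.ne']
  ring

lemma rpow_mul_le_rpow_mul_jap_rpow {s g C : ℝ} (hs : 0 ≤ s) (hR : 1 ≤ R) (hN : 1 ≤ N)
    (hg : 0 ≤ g) (hC : (1 + |N * (x - y)|) ^ (s + 2 * |D|) * g ≤ C) (hx : |x| ≤ R)
    (hy : 2 * R ≤ |y|) :
    N ^ s * g ≤ 2 ^ |D| * C * ((R * N) ^ (-D) * jap y ^ (-D)) := by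
  have hxy : |y| ≤ |x| + |x - y| := by simpa using abs_sub x (x - y)
  rw [abs_mul, abs_of_pos (by linarith)] at hC
  set t := 1 + N * |x - y|
  have ht : 0 < t := by positivity
  have hNt : N ≤ t := by nlinarith
  have hRNt : R * N ≤ t := by nlinarith
  have hjt : jap y ≤ 2 * t := by nlinarith [jap_le_one_add_abs y]
  have hRN : 1 ≤ R * N := one_le_mul_of_one_le_of_one_le hR hN
  have hj : 0 < jap y := jap_pos y
  rw [rpow_neg hj.le, rpow_neg (by positivity), ← mul_inv, ← div_eq_mul_inv,
    le_div_iff₀ (by positivity)]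
  calc N ^ s * g * ((R * N) ^ D * jap y ^ D)
      ≤ t ^ s * g * (t ^ |D| * (2 * t) ^ |D|) := by
        gcongr
        exacts [rpow_le_rpow_abs hRN hRNt D, rpow_le_rpow_abs (one_le_jap y) hjt D]
    _ = 2 ^ |D| * (t ^ (s + 2 * |D|) * g) := by
        rw [mul_rpow (by positivity) ht.le, two_mul |D|, rpow_add ht, rpow_add ht]
        ring
    _ ≤ 2 ^ |D| * C := by gcongr

lemma rpow_mul_mul_indicator_norm_le {s g C : ℝ} (hs : 0 ≤ s) (hR : 1 ≤ R) (hN : 1 ≤ N)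
    (hg : 0 ≤ g) (hC : (1 + |N * (x - y)|) ^ (s + 2 * |D|) * g ≤ C) (hx : x ∈ Icc (-R) R) :
    N ^ s * g * (Icc (-(2 * R)) (2 * R))ᶜ.indicator (fun y => ‖φ y‖) y ≤
      2 ^ |D| * C * ((R * N) ^ (-D) * (jap y ^ (-D) * ‖φ y‖)) := by
  have hj : 0 < jap y := jap_pos y
  have hC0 : 0 ≤ C := le_trans (by positivity) hC
  by_cases hy : y ∈ Icc (-(2 * R)) (2 * R)
  · rw [indicator_of_notMem (not_not_intro hy), mul_zero]
    positivity
  · have hyR : 2 * R ≤ |y| := (not_le.1 fun h => hy (abs_le.1 h)).le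
    rw [indicator_of_mem hy]
    calc N ^ s * g * ‖φ y‖
        ≤ 2 ^ |D| * C * ((R * N) ^ (-D) * jap y ^ (-D)) * ‖φ y‖ :=
          mul_le_mul_of_nonneg_right
            (rpow_mul_le_rpow_mul_jap_rpow hs hR hN hg hC (abs_le.2 hx) hyR) (norm_nonneg _)
      _ = _ := by ring

lemma rpow_mul_integral_norm_mul_norm_sub_le {G : 𝓢(ℝ, ℂ)} {α A C : ℝ} {c : ℂ}
    (hα : 0 ≤ α) (hR : 1 ≤ R) (hN : 1 ≤ N)
    (hC : ∀ z, (1 + |z|) ^ (α + 1 + 2 * |D|) * ‖G z‖ ≤ C)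
    (hint : Integrable fun x => jap x ^ (-D) * ‖φ x‖) (hx : x ∈ Icc (-R) R)
    (hφ : ∀ y, ‖φ y - c‖ ≤
      A * |x - y| ^ α + (Icc (-(2 * R)) (2 * R))ᶜ.indicator (fun y => ‖φ y‖) y) :
    N ^ (α + 1) * ∫ y, ‖G (N * (x - y))‖ * ‖φ y - c‖ ≤
      A * (∫ z, |z| ^ α * ‖G z‖) + 2 ^ |D| * C * ((R * N) ^ (-D) * wL1 D φ) := by
  have hN0 : 0 < N := by linarith
  set near : ℝ → ℝ := fun y => |x - y| ^ α * ‖G (N * (x - y))‖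
  set far : ℝ → ℝ := fun y => 2 ^ |D| * C * ((R * N) ^ (-D) * (jap y ^ (-D) * ‖φ y‖))
  have hnear : Integrable near := by
    have hdil := integrable_norm_rpow_mul_norm (μ := volume) (dilate N hN0.ne' G) hα
    exact hdil.comp_sub_left x
  have hfar : Integrable far := (hint.const_mul _).const_mul _
  calc N ^ (α + 1) * ∫ y, ‖G (N * (x - y))‖ * ‖φ y - c‖
      = ∫ y, N ^ (α + 1) * (‖G (N * (x - y))‖ * ‖φ y - c‖) := (integral_const_mul _ _).symm
    _ ≤ ∫ y, A * N ^ (α + 1) * near y + far y := by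
        refine integral_mono_of_nonneg (ae_of_all _ fun y => by positivity)
          ((hnear.const_mul _).add hfar) (ae_of_all _ fun y => ?_)
        have hmul := mul_le_mul_of_nonneg_left (hφ y)
          (by positivity : 0 ≤ N ^ (α + 1) * ‖G (N * (x - y))‖)
        have hweight := rpow_mul_mul_indicator_norm_le (φ := φ) (by linarith : 0 ≤ α + 1) hR hN
          (norm_nonneg _) (hC (N * (x - y))) hx
        linear_combination hmul + hweight
    _ = A * (N ^ (α + 1) * ∫ y, near y) + 2 ^ |D| * C * ((R * N) ^ (-D) * wL1 D φ) := by
        rw [integral_add (hnear.const_mul _) hfar, integral_const_mul, integral_const_mul,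
          integral_const_mul, wL1]
        ring
    _ = _ := by rw [rpow_mul_integral_abs_rpow_mul_comp (fun z => ‖G z‖) α hN0 x]

lemma rpow_mul_norm_deriv_PLE_le {ρ : 𝓢(ℝ, ℝ)} {α C : ℝ} (hα : 0 ≤ α) (hR : 1 ≤ R) (hN : 1 ≤ N)
    (hC : ∀ z, (1 + |z|) ^ (α + 1 + 2 * |D|) * ‖deriv (invFourierSchwartz ρ) z‖ ≤ C)
    (hφ : AEStronglyMeasurable φ) (hint : Integrable fun x => jap x ^ (-D) * ‖φ x‖)
    (hfin : holderNormE α (Icc (-(2 * R)) (2 * R)) φ ≠ ⊤) (hx : x ∈ Icc (-R) R) :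
    N ^ (α - 1) * ‖deriv (PLE ρ N φ) x‖ ≤
      2 * (holderNormE α (Icc (-(2 * R)) (2 * R)) φ).toReal *
          (∫ z, |z| ^ α * ‖deriv (invFourierSchwartz ρ) z‖) +
        2 ^ |D| * C * ((R * N) ^ (-D) * wL1 D φ) := by
  have hN0 : 0 < N := by linarith
  calc N ^ (α - 1) * ‖deriv (PLE ρ N φ) x‖
      = N ^ (α + 1) *
          ‖∫ y, deriv (invFourierSchwartz ρ) (N * (x - y)) * (φ y - φ x)‖ := by
        rw [deriv_PLE ρ hN0 hφ hint, norm_mul, norm_pow, Complex.norm_real,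
          norm_of_nonneg hN0.le, rpow_sub_one hN0.ne', rpow_add_one hN0.ne']
        field_simp
    _ ≤ N ^ (α + 1) *
          ∫ y, ‖deriv (invFourierSchwartz ρ) (N * (x - y))‖ * ‖φ y - φ x‖ := by
        gcongr
        exact (norm_integral_le_integral_norm _).trans_eq (by simp only [norm_mul])
    _ ≤ _ := rpow_mul_integral_norm_mul_norm_sub_le
        (G := SchwartzMap.derivCLM ℝ ℂ (invFourierSchwartz ρ)) hα hR hN hC hint hx
        (norm_sub_le_holderNormE_mul_add_indicator hα hR hfin hx)

end KernelEstimates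

lemma IsLPBump.hasCompactSupport {ρ : ℝ → ℝ} (hρ : IsLPBump ρ) : HasCompactSupport ρ :=
  .intro isCompact_Icc hρ.2.2.2

lemma wL1_nonneg (D : ℝ) (φ : ℝ → ℂ) : 0 ≤ wL1 D φ :=
  integral_nonneg fun x => mul_nonneg (rpow_nonneg (jap_pos x).le _) (norm_nonneg _)

theorem PLE_deriv_bound_general (ρ : 𝓢(ℝ, ℝ)) {α : ℝ} (hα : 0 ≤ α) (D : ℝ) :
    ∃ C : ℝ, 0 < C ∧ ∀ R N : ℝ, 1 ≤ R → 1 ≤ N → ∀ φ : ℝ → ℂ, AEStronglyMeasurable φ →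
      Integrable (fun x => jap x ^ (-D) * ‖φ x‖) →
        ENNReal.ofReal (N ^ (α - 1)) * supNormE (Icc (-R) R) (deriv (PLE ρ N φ)) ≤
          ENNReal.ofReal C *
            (holderNormE α (Icc (-(2 * R)) (2 * R)) φ +
              ENNReal.ofReal ((R * N) ^ (-D)) * ENNReal.ofReal (wL1 D φ)) := by
  obtain ⟨M, hM, hdecay⟩ := exists_one_add_norm_rpow_mul_norm_le
    (SchwartzMap.derivCLM ℝ ℂ (invFourierSchwartz ρ)) (α + 1 + 2 * |D|)
  set J := ∫ z, |z| ^ α * ‖deriv (invFourierSchwartz ρ) z‖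
  have hJ : 0 ≤ J := integral_nonneg fun z => by positivity
  have hC : 0 < 2 * J + 2 ^ |D| * M := by positivity
  refine ⟨2 * J + 2 ^ |D| * M, hC, fun R N hR hN φ hφ hint => mul_supNormE_le_iff.2 fun x hx => ?_⟩
  obtain hinf | hfin := eq_or_ne (holderNormE α (Icc (-(2 * R)) (2 * R)) φ) ⊤
  · simp [hinf, ENNReal.mul_top, hC]
  have hbound := rpow_mul_norm_deriv_PLE_le hα hR hN hdecay hφ hint hfin hx
  rw [← ENNReal.ofReal_toReal hfin]
  set H := (holderNormE α (Icc (-(2 * R)) (2 * R)) φ).toReal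
  have hH : 0 ≤ H := ENNReal.toReal_nonneg
  have hw := wL1_nonneg D φ
  rw [← ofReal_norm, ← ENNReal.ofReal_mul (by positivity), ← ENNReal.ofReal_mul (by positivity),
    ← ENNReal.ofReal_add hH (by positivity), ← ENNReal.ofReal_mul hC.le]
  refine ENNReal.ofReal_le_ofReal (hbound.trans ?_)
  set W := (R * N) ^ (-D) * wL1 D φ
  calc 2 * H * J + 2 ^ |D| * M * W
      ≤ 2 * H * J + 2 ^ |D| * M * W + (2 * J * W + 2 ^ |D| * M * H) :=
        le_add_of_nonneg_right (by positivity)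
    _ = (2 * J + 2 ^ |D| * M) * (H + W) := by ring

/-- **Derivative bound for low-frequency projections** (Lemma 2.2, estimate (2.6)). -/
theorem PLE_deriv_bound (ρ : ℝ → ℝ) (hρ : IsLPBump ρ) (α : ℝ) (hα0 : 0 ≤ α) (hα1 : α < 1)
    (D : ℝ) (hD : 1 ≤ D) :
    ∃ C : ℝ, 0 < C ∧
      ∀ R N : ℝ, 10 ≤ R → (∃ k : ℕ, N = 2 ^ k) →
        ∀ φ : ℝ → ℂ, Measurable φ → Integrable (fun x => jap x ^ (-D) * ‖φ x‖) →
          ENNReal.ofReal (N ^ (α - 1)) * supNormE (Set.Icc (-R) R) (deriv (PLE ρ N φ)) ≤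
            ENNReal.ofReal C *
              (holderNormE α (Set.Icc (-(2 * R)) (2 * R)) φ +
                ENNReal.ofReal ((R * N) ^ (-D)) * ENNReal.ofReal (wL1 D φ)) := by
  obtain ⟨C, hC, hbound⟩ := PLE_deriv_bound_general (hρ.hasCompactSupport.toSchwartzMap hρ.1) hα0 D
  exact ⟨C, hC, fun R N hR ⟨k, hN⟩ φ hφ => hbound R N (by linarith)
    (hN ▸ one_le_pow₀ one_le_two) φ hφ.aestronglyMeasurable⟩
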